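/- arXiv:1909.12237 — 3 statements merged into one kernel-verified Lean document; each statement's English description precedes it below -/
import Mathlib

section
/- Consider a Bayesian model with prior density π0(θ) on ℝ^d and sampling density π(s∣θ) on ℝ^p, and an additive perturbation mechanism with noise density η on ℝ^p (bounded, with 0 < sup η < ∞) and bandwidth h > 0, so that the privatized query s_obs has conditional density η((s_obs − s)/h) given the noiseless query s. Let (θ, s, I) be jointly distributed so that θ has density π0, s given θ has density π(s∣θ), and given (θ, s) the acceptance indicator I is Bernoulli with success probability c·η((s_obs − s)/h), where c = (sup_u η(u))^{-1}. Assume P(I = 1) > 0 and that the denominator ∫∫ π0(θ) η((s_obs − s)/h) π(s∣θ) ds dθ is finite and positive. Then the conditional distribution of θ given I = 1 has density (with respect to Lebesgue measure on ℝ^d) equal to the true posterior π(θ∣s_obs) = π0(θ) ∫ η((s_obs − s)/h) π(s∣θ) ds / ∫∫ π0(θ') η((s_obs − s)/h) π(s∣θ') ds dθ'. -/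
open MeasureTheory

/-! Accepting a simulated pair `(θ, s)` with probability proportional to `k s` leaves the accepted
pairs with density proportional to `π₀(θ) k(s) π(s ∣ θ)`; the constant of proportionality cancels
on conditioning. Integrating `s` out by Fubini turns this density into the posterior. -/

section RejectionSampling

variable {Ω 𝓧 : Type*} [MeasurableSpace Ω] [MeasurableSpace 𝓧]
  {μ : Measure Ω} {ν : Measure 𝓧} {X : Ω → 𝓧} {E : Set Ω} {f : 𝓧 → ℝ} {c : ℝ}

theorem measure_mem_and_accepted_div_eq (hc : 0 < c) (hf : 0 < ∫ x, f x ∂ν)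
    (hE : ∀ A : Set 𝓧, MeasurableSet A →
      μ {ω | X ω ∈ A ∧ ω ∈ E} = ENNReal.ofReal (c * ∫ x in A, f x ∂ν))
    {A : Set 𝓧} (hA : MeasurableSet A) :
    μ {ω | X ω ∈ A ∧ ω ∈ E} / μ E = ENNReal.ofReal ((∫ x in A, f x ∂ν) / ∫ x, f x ∂ν) := by
  have h_total : μ E = ENNReal.ofReal (c * ∫ x, f x ∂ν) := by
    simpa using hE Set.univ MeasurableSet.univ
  rw [hE A hA, h_total, ← ENNReal.ofReal_div_of_pos (mul_pos hc hf),
    mul_div_mul_left _ _ hc.ne']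

end RejectionSampling

section Posterior

variable {Θ S : Type*} [MeasurableSpace Θ] [MeasurableSpace S]

/-- The marginal likelihood of the observation in a model with prior density `prior` with respect
to `ν`, latent query density `lik t` with respect to `ρ`, and density `k u` of the observation given
the query `u`. The observation is fixed, so only the function `k` of the query is recorded. -/
noncomputable def latentEvidence (ν : Measure Θ) (ρ : Measure S)
    (prior : Θ → ℝ) (lik : Θ → S → ℝ) (k : S → ℝ) : ℝ :=
  ∫ x, prior x.1 * k x.2 * lik x.1 x.2 ∂ν.prod ρ

/-- The posterior density of the parameter, with respect to `ν`, in the model of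
`latentEvidence`, given by Bayes' formula; it is `0` if the evidence is `0`. -/
noncomputable def latentPosterior (ν : Measure Θ) (ρ : Measure S)
    (prior : Θ → ℝ) (lik : Θ → S → ℝ) (k : S → ℝ) (t : Θ) : ℝ :=
  prior t * (∫ u, k u * lik t u ∂ρ) / latentEvidence ν ρ prior lik k

variable {ν : Measure Θ} {ρ : Measure S} [SFinite ν] [SFinite ρ]
  {prior : Θ → ℝ} {lik : Θ → S → ℝ} {k : S → ℝ}

theorem setIntegral_latentPosterior
    (h_int : Integrable (fun x : Θ × S => prior x.1 * k x.2 * lik x.1 x.2) (ν.prod ρ))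
    (B : Set Θ) :
    ∫ t in B, latentPosterior ν ρ prior lik k t ∂ν =
      (∫ x in B ×ˢ Set.univ, prior x.1 * k x.2 * lik x.1 x.2 ∂ν.prod ρ) /
        latentEvidence ν ρ prior lik k := by
  rw [setIntegral_prod _ h_int.integrableOn]
  simp only [latentPosterior, integral_div, setIntegral_univ, mul_assoc, integral_const_mul]

theorem rejection_abc_exact_posterior_general
    {Ω : Type*} [MeasurableSpace Ω] {μ : Measure Ω} {θ : Ω → Θ} {s : Ω → S} {E : Set Ω}
    {c : ℝ} (hc : 0 < c)
    (h_accept : ∀ A : Set (Θ × S), MeasurableSet A →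
      μ {ω | (θ ω, s ω) ∈ A ∧ ω ∈ E} =
        ENNReal.ofReal (∫ x in A, prior x.1 * lik x.1 x.2 * (c * k x.2) ∂ν.prod ρ))
    (h_pos : 0 < latentEvidence ν ρ prior lik k) {B : Set Θ} (hB : MeasurableSet B) :
    μ {ω | θ ω ∈ B ∧ ω ∈ E} / μ E =
      ENNReal.ofReal (∫ t in B, latentPosterior ν ρ prior lik k t ∂ν) := by
  have h_proportional (A : Set (Θ × S)) :
      ∫ x in A, prior x.1 * lik x.1 x.2 * (c * k x.2) ∂ν.prod ρ =
        c * ∫ x in A, prior x.1 * k x.2 * lik x.1 x.2 ∂ν.prod ρ := by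
    rw [← integral_const_mul]
    congr with x
    ring
  have h_accepted_law := measure_mem_and_accepted_div_eq hc h_pos
    (fun A hA => (h_accept A hA).trans (congrArg ENNReal.ofReal (h_proportional A)))
    (hB.prod MeasurableSet.univ)
  rw [setIntegral_latentPosterior (.of_integral_ne_zero h_pos.ne')]
  simpa [latentEvidence] using h_accepted_law

end Posterior

/-- **Rejection ABC with differentially private queries yields exact posterior samples.**
Given a prior density `π0` on `ℝ^d`, a sampling density `π(s∣θ)` on `ℝ^p`, an additive
perturbation mechanism with bounded noise density `η` and bandwidth `h > 0`, and observed
privatized query `sobs`, suppose `(θ, s, I)` are jointly distributed so that `(θ, s)` has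
joint density `π0(θ)π(s∣θ)` and, given `(θ, s)`, the indicator `I` is Bernoulli with success
probability `c·η((sobs − s)/h)` where `c = (sup η)⁻¹`.  If `P(I = 1) > 0` and the normalizing
integral is finite and positive, then the conditional distribution of `θ` given `I = 1` has
density equal to the true posterior
`π(θ∣sobs) = π0(θ) ∫ η((sobs − s)/h) π(s∣θ) ds / ∫∫ π0(θ') η((sobs − s)/h) π(s∣θ') ds dθ'`. -/
theorem rejection_abc_exact_posterior
    {d p : ℕ} {Ω : Type*} [MeasurableSpace Ω] (μ : Measure Ω) [IsProbabilityMeasure μ]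
    (π0 : (Fin d → ℝ) → ℝ) (π : (Fin d → ℝ) → (Fin p → ℝ) → ℝ)
    (η : (Fin p → ℝ) → ℝ) (h : ℝ) (sobs : Fin p → ℝ)
    -- measurability and nonnegativity of the densities
    (hπ0_meas : Measurable π0) (hπ0_nonneg : ∀ t, 0 ≤ π0 t)
    (hπ0_prob : ∫ t, π0 t = 1)
    (hπ_meas : Measurable (Function.uncurry π)) (hπ_nonneg : ∀ t s, 0 ≤ π t s)
    (hπ_prob : ∀ t, ∫ s, π t s = 1)
    (hη_meas : Measurable η) (hη_nonneg : ∀ u, 0 ≤ η u) (hη_prob : ∫ u, η u = 1)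
    -- the noise density is bounded with `0 < sup η < ∞`
    (hη_bdd : BddAbove (Set.range η)) (hη_sup_pos : 0 < ⨆ u, η u)
    (hh : 0 < h)
    -- the acceptance constant
    (c : ℝ) (hc : c = (⨆ u, η u)⁻¹)
    -- random elements: the parameter, the simulated query, and the acceptance indicator
    (θ : Ω → (Fin d → ℝ)) (s : Ω → (Fin p → ℝ)) (I : Ω → Bool)
    (hθ_meas : Measurable θ) (hs_meas : Measurable s) (hI_meas : Measurable I)
    -- `(θ, s)` has joint density `π0(θ)π(s∣θ)` w.r.t. Lebesgue measure
    (h_joint : ∀ A : Set ((Fin d → ℝ) × (Fin p → ℝ)), MeasurableSet A →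
      μ {ω | (θ ω, s ω) ∈ A} = ENNReal.ofReal (∫ x in A, π0 x.1 * π x.1 x.2))
    -- given `(θ, s)`, `I` is Bernoulli with success probability `c·η((sobs − s)/h)`
    (h_accept : ∀ A : Set ((Fin d → ℝ) × (Fin p → ℝ)), MeasurableSet A →
      μ {ω | (θ ω, s ω) ∈ A ∧ I ω = true} =
        ENNReal.ofReal (∫ x in A, π0 x.1 * π x.1 x.2 * (c * η (h⁻¹ • (sobs - x.2)))))
    -- overall acceptance probability is positive
    (h_acc_pos : 0 < μ {ω | I ω = true})
    -- the normalizing constant `∫∫ π0(θ) η((sobs − s)/h) π(s∣θ) ds dθ` is finite and positive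
    (h_int : Integrable (fun x : (Fin d → ℝ) × (Fin p → ℝ) =>
      π0 x.1 * η (h⁻¹ • (sobs - x.2)) * π x.1 x.2))
    (h_pos : 0 < ∫ x : (Fin d → ℝ) × (Fin p → ℝ), π0 x.1 * η (h⁻¹ • (sobs - x.2)) * π x.1 x.2) :
    ∀ B : Set (Fin d → ℝ), MeasurableSet B →
      μ {ω | θ ω ∈ B ∧ I ω = true} / μ {ω | I ω = true} =
        ENNReal.ofReal (∫ t in B,
          π0 t * (∫ u, η (h⁻¹ • (sobs - u)) * π t u) /
            ∫ x : (Fin d → ℝ) × (Fin p → ℝ), π0 x.1 * η (h⁻¹ • (sobs - x.2)) * π x.1 x.2) := by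
  have hc_pos : 0 < c := hc ▸ inv_pos.mpr hη_sup_pos
  exact fun _ hB => rejection_abc_exact_posterior_general (ν := volume) (ρ := volume)
    (k := fun u => η (h⁻¹ • (sobs - u))) hc_pos h_accept h_pos hB
end

section
/- Consider a Bayesian model with prior density π0(θ) on ℝ^d and sampling density π(s∣θ) on ℝ^p, and a general perturbation mechanism with conditional density η_obs(s_obs∣s) of the privatized query given the noiseless query s, which does not depend on θ. Assume 0 < C := sup_s η_obs(s_obs∣s) < ∞ for the fixed observed value s_obs. Let (θ, s, I) be jointly distributed so that θ has density π0, s given θ has density π(s∣θ), and given (θ, s) the acceptance indicator I is Bernoulli with success probability C^{-1}·η_obs(s_obs∣s). Assume P(I = 1) > 0 and that ∫∫ π0(θ) η_obs(s_obs∣s) π(s∣θ) ds dθ is finite and positive. Then the conditional distribution of θ given I = 1 has density equal to the true posterior π(θ∣s_obs) = π0(θ) ∫ η_obs(s_obs∣s) π(s∣θ) ds / ∫∫ π0(θ') η_obs(s_obs∣s) π(s∣θ') ds dθ'. -/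
open MeasureTheory

/-!
The accepted pairs `(θ, s)` have sub-density `C⁻¹ π0(θ) ηobs(sobs∣s) π(s∣θ)`. Dividing by the
acceptance probability cancels `C⁻¹`, and Fubini integrates out `s`.
-/

section RejectionSampling

variable {Ω E : Type*} [MeasurableSpace Ω] [MeasurableSpace E]

theorem measure_preimage_inter_div_of_density_const_mul {μ : Measure Ω} {ν : Measure E}
    {X : Ω → E} {acc : Set Ω} {g : E → ℝ} {c : ℝ} (hc : 0 < c)
    (h_acc : ∀ A, MeasurableSet A → μ (X ⁻¹' A ∩ acc) = ENNReal.ofReal (∫ x in A, c * g x ∂ν))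
    (hg_pos : 0 < ∫ x, g x ∂ν) {A : Set E} (hA : MeasurableSet A) :
    μ (X ⁻¹' A ∩ acc) / μ acc = ENNReal.ofReal ((∫ x in A, g x ∂ν) / ∫ x, g x ∂ν) := by
  have h_total : μ acc = ENNReal.ofReal (c * ∫ x, g x ∂ν) := by
    simpa only [Set.preimage_univ, Set.univ_inter, Measure.restrict_univ, integral_const_mul]
      using h_acc Set.univ MeasurableSet.univ
  rw [h_acc A hA, h_total, integral_const_mul, ← ENNReal.ofReal_div_of_pos (mul_pos hc hg_pos),
    mul_div_mul_left _ _ hc.ne']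

end RejectionSampling

section Posterior

variable {Θ S : Type*} [MeasurableSpace Θ] [MeasurableSpace S]

/-- The posterior density of a parameter `t` when the data are a perturbation of a latent query
`u`: `prior` is the density of `t` with respect to `κ`, `lik t` that of `u` given `t` with respect
to `ρ`, and `η u` is the density of the perturbed query given `u`, evaluated at the observation.
It is the zero function when the normalizing integral vanishes. -/
noncomputable def posteriorDensity (κ : Measure Θ) (ρ : Measure S) (prior : Θ → ℝ)
    (lik : Θ → S → ℝ) (η : S → ℝ) (t : Θ) : ℝ :=
  prior t * (∫ u, η u * lik t u ∂ρ) / ∫ x, prior x.1 * η x.2 * lik x.1 x.2 ∂κ.prod ρ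

variable {κ : Measure Θ} {ρ : Measure S} [SFinite κ] [SFinite ρ]
  {prior : Θ → ℝ} {lik : Θ → S → ℝ} {η : S → ℝ}

theorem setIntegral_posteriorDensity
    (h_int : Integrable (fun x : Θ × S => prior x.1 * η x.2 * lik x.1 x.2) (κ.prod ρ))
    (B : Set Θ) :
    ∫ t in B, posteriorDensity κ ρ prior lik η t ∂κ =
      (∫ x in B ×ˢ Set.univ, prior x.1 * η x.2 * lik x.1 x.2 ∂κ.prod ρ) /
        ∫ x, prior x.1 * η x.2 * lik x.1 x.2 ∂κ.prod ρ := by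
  simp only [posteriorDensity, integral_div]
  rw [setIntegral_prod _ h_int.integrableOn]
  simp only [Measure.restrict_univ, mul_assoc, integral_const_mul]

theorem rejection_abc_exact_posterior_general_mechanism_general
    {Ω : Type*} [MeasurableSpace Ω] {μ : Measure Ω} {C : ℝ} (hC : 0 < C)
    {θ : Ω → Θ} {s : Ω → S} {acc : Set Ω}
    (h_accept : ∀ A : Set (Θ × S), MeasurableSet A →
      μ ((fun ω => (θ ω, s ω)) ⁻¹' A ∩ acc) =
        ENNReal.ofReal (∫ x in A, prior x.1 * lik x.1 x.2 * (C⁻¹ * η x.2) ∂κ.prod ρ))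
    (h_pos : 0 < ∫ x, prior x.1 * η x.2 * lik x.1 x.2 ∂κ.prod ρ)
    {B : Set Θ} (hB : MeasurableSet B) :
    μ (θ ⁻¹' B ∩ acc) / μ acc =
      ENNReal.ofReal (∫ t in B, posteriorDensity κ ρ prior lik η t ∂κ) := by
  have h_density (x : Θ × S) : prior x.1 * lik x.1 x.2 * (C⁻¹ * η x.2) =
      C⁻¹ * (prior x.1 * η x.2 * lik x.1 x.2) := by ring
  have h_preimage : (fun ω => (θ ω, s ω)) ⁻¹' (B ×ˢ Set.univ) = θ ⁻¹' B := by
    rw [Set.mk_preimage_prod, Set.preimage_univ, Set.inter_univ]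
  simp only [h_density] at h_accept
  rw [setIntegral_posteriorDensity (.of_integral_ne_zero h_pos.ne'), ← h_preimage]
  exact measure_preimage_inter_div_of_density_const_mul (inv_pos.2 hC) h_accept h_pos
    (hB.prod MeasurableSet.univ)

end Posterior

/-- **Rejection ABC is exact for a general (not necessarily additive) perturbation mechanism.**
Given a prior density `π0` on `ℝ^d`, a sampling density `π(s∣θ)` on `ℝ^p`, and a perturbation
mechanism with conditional density `ηobs(sobs∣s)` (not depending on `θ`) satisfying
`0 < C := sup_s ηobs(sobs∣s) < ∞`, suppose `(θ, s, I)` are jointly distributed so that `(θ, s)`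
has joint density `π0(θ)π(s∣θ)` and, given `(θ, s)`, the indicator `I` is Bernoulli with success
probability `C⁻¹·ηobs(sobs∣s)`.  If `P(I = 1) > 0` and the normalizing integral is finite and
positive, then the conditional distribution of `θ` given `I = 1` has density equal to the true
posterior `π(θ∣sobs) = π0(θ) ∫ ηobs(sobs∣s) π(s∣θ) ds / ∫∫ π0(θ') ηobs(sobs∣s) π(s∣θ') ds dθ'`. -/
theorem rejection_abc_exact_posterior_general_mechanism
    {d p : ℕ} {Ω : Type*} [MeasurableSpace Ω] (μ : Measure Ω) [IsProbabilityMeasure μ]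
    (π0 : (Fin d → ℝ) → ℝ) (π : (Fin d → ℝ) → (Fin p → ℝ) → ℝ)
    (ηobs : (Fin p → ℝ) → (Fin p → ℝ) → ℝ) (sobs : Fin p → ℝ)
    -- measurability and nonnegativity of the densities
    (hπ0_meas : Measurable π0) (hπ0_nonneg : ∀ t, 0 ≤ π0 t)
    (hπ0_prob : ∫ t, π0 t = 1)
    (hπ_meas : Measurable (Function.uncurry π)) (hπ_nonneg : ∀ t s, 0 ≤ π t s)
    (hπ_prob : ∀ t, ∫ s, π t s = 1)
    -- `ηobs(·∣s)` is for each `s` a probability density, evaluated here at the fixed `sobs`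
    (hη_meas : Measurable (Function.uncurry ηobs)) (hη_nonneg : ∀ r s, 0 ≤ ηobs r s)
    (hη_prob : ∀ s, ∫ r, ηobs r s = 1)
    -- `0 < C := sup_s ηobs(sobs∣s) < ∞`
    (hη_bdd : BddAbove (Set.range fun s => ηobs sobs s))
    (hC_pos : 0 < ⨆ s, ηobs sobs s)
    -- the acceptance constant
    (C : ℝ) (hC : C = ⨆ s, ηobs sobs s)
    -- random elements: the parameter, the simulated query, and the acceptance indicator
    (θ : Ω → (Fin d → ℝ)) (s : Ω → (Fin p → ℝ)) (I : Ω → Bool)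
    (hθ_meas : Measurable θ) (hs_meas : Measurable s) (hI_meas : Measurable I)
    -- `(θ, s)` has joint density `π0(θ)π(s∣θ)` w.r.t. Lebesgue measure
    (h_joint : ∀ A : Set ((Fin d → ℝ) × (Fin p → ℝ)), MeasurableSet A →
      μ {ω | (θ ω, s ω) ∈ A} = ENNReal.ofReal (∫ x in A, π0 x.1 * π x.1 x.2))
    -- given `(θ, s)`, `I` is Bernoulli with success probability `C⁻¹·ηobs(sobs∣s)`
    (h_accept : ∀ A : Set ((Fin d → ℝ) × (Fin p → ℝ)), MeasurableSet A →
      μ {ω | (θ ω, s ω) ∈ A ∧ I ω = true} =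
        ENNReal.ofReal (∫ x in A, π0 x.1 * π x.1 x.2 * (C⁻¹ * ηobs sobs x.2)))
    -- overall acceptance probability is positive
    (h_acc_pos : 0 < μ {ω | I ω = true})
    -- the normalizing constant `∫∫ π0(θ) ηobs(sobs∣s) π(s∣θ) ds dθ` is finite and positive
    (h_int : Integrable (fun x : (Fin d → ℝ) × (Fin p → ℝ) =>
      π0 x.1 * ηobs sobs x.2 * π x.1 x.2))
    (h_pos : 0 < ∫ x : (Fin d → ℝ) × (Fin p → ℝ), π0 x.1 * ηobs sobs x.2 * π x.1 x.2) :
    ∀ B : Set (Fin d → ℝ), MeasurableSet B →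
      μ {ω | θ ω ∈ B ∧ I ω = true} / μ {ω | I ω = true} =
        ENNReal.ofReal (∫ t in B,
          π0 t * (∫ u, ηobs sobs u * π t u) /
            ∫ x : (Fin d → ℝ) × (Fin p → ℝ), π0 x.1 * ηobs sobs x.2 * π x.1 x.2) := by
  intro B hB
  exact rejection_abc_exact_posterior_general_mechanism_general (hC ▸ hC_pos) h_accept h_pos hB
end

section
/- Let θ > 0, ε > 0, and let s_obs > 0 be a real number with n = ⌈s_obs⌉ (the least integer ≥ s_obs). Then the Poisson–Laplace mixture series satisfies ∑_{k=0}^{∞} (θ^k / k!) · e^{−ε·|s_obs − k|} = e^{θ e^{ε} − ε s_obs} · Γ(n, θ e^{ε}) / Γ(n) + e^{θ e^{−ε} + ε s_obs} · γ(n, θ e^{−ε}) / Γ(n), where Γ(n, x) = ∫_x^∞ r^{n−1} e^{−r} dr is the upper incomplete Gamma function, Γ(n) = Γ(n, 0) = (n−1)!, and γ(n, x) = Γ(n) − Γ(n, x) is the lower incomplete Gamma function. -/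
open MeasureTheory

/-!
With `Tₙ(x) = ∑_{k < n} x ^ k / k!`, the function `-e ^ (-x) Tₙ(x)` is a primitive of
`x ^ (n - 1) e ^ (-x) / (n - 1)!`, so that `e ^ x Γ(n, x) / Γ(n) = Tₙ(x)` and
`e ^ x γ(n, x) / Γ(n) = e ^ x - Tₙ(x)`: the two incomplete Gamma functions cut the exponential
series at `n`. The Laplace weight `e ^ (-ε |s - k|)` is geometric in `k` on each side of `s`, where
it only rescales `θ` to `θ e ^ (±ε)`, so the mixture series is a head of one exponential series
plus a tail of another, cut at `n = ⌈s⌉`.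
-/

open Asymptotics Filter Finset
open scoped Nat Topology

theorem hasDerivAt_sum_range_succ_pow_div_factorial {𝕜 : Type*} [NontriviallyNormedField 𝕜]
    [CharZero 𝕜] (n : ℕ) (x : 𝕜) :
    HasDerivAt (fun y ↦ ∑ k ∈ range (n + 1), y ^ k / (k ! : 𝕜))
      (∑ k ∈ range n, x ^ k / (k ! : 𝕜)) x := by
  have hasDerivAt_term (k : ℕ) :
      HasDerivAt (fun y ↦ y ^ (k + 1) / ((k + 1)! : 𝕜)) (x ^ k / (k ! : 𝕜)) x := by
    refine ((hasDerivAt_pow (k + 1) x).div_const _).congr_deriv ?_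
    have : (k ! : 𝕜) ≠ 0 := mod_cast k.factorial_ne_zero
    have : (k : 𝕜) + 1 ≠ 0 := mod_cast k.succ_ne_zero
    rw [Nat.add_sub_cancel, Nat.factorial_succ]
    push_cast
    field_simp
  simp only [sum_range_succ', pow_zero]
  exact (HasDerivAt.fun_sum fun k _ ↦ hasDerivAt_term k).add_const _

theorem hasDerivAt_neg_exp_neg_mul_sum_range_succ (n : ℕ) (x : ℝ) :
    HasDerivAt (fun y ↦ -(Real.exp (-y) * ∑ k ∈ range (n + 1), y ^ k / (k ! : ℝ)))
      (x ^ n / (n ! : ℝ) * Real.exp (-x)) x := by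
  refine ((hasDerivAt_neg x).exp.mul
    (hasDerivAt_sum_range_succ_pow_div_factorial n x)).neg.congr_deriv ?_
  rw [sum_range_succ]
  ring

theorem tendsto_exp_neg_mul_sum_range_atTop (n : ℕ) :
    Tendsto (fun x ↦ Real.exp (-x) * ∑ k ∈ range n, x ^ k / (k ! : ℝ)) atTop (𝓝 0) := by
  have tendsto_sum : Tendsto (fun x ↦ ∑ k ∈ range n, x ^ k * Real.exp (-x) / (k ! : ℝ)) atTop
      (𝓝 (∑ k ∈ range n, 0 / (k ! : ℝ))) :=
    tendsto_finsetSum _ fun k _ ↦ (Real.tendsto_pow_mul_exp_neg_atTop_nhds_zero k).div_const _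
  simp only [zero_div, sum_const_zero] at tendsto_sum
  refine tendsto_sum.congr fun x ↦ ?_
  rw [mul_sum]
  exact sum_congr rfl fun k _ ↦ by ring

theorem integrableOn_pow_mul_exp_neg_Ioi (n : ℕ) (a : ℝ) :
    IntegrableOn (fun x ↦ x ^ n * Real.exp (-x)) (Set.Ioi a) := by
  refine integrable_of_isBigO_exp_neg (b := 1 / 2) (by norm_num) (by fun_prop) ?_
  have isBigO_mul : (fun x ↦ x ^ n * Real.exp (-x)) =O[atTop]
      fun x ↦ Real.exp (1 / 2 * x) * Real.exp (-x) :=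
    (isLittleO_pow_exp_pos_mul_atTop n (by norm_num)).isBigO.mul (isBigO_refl _ _)
  refine isBigO_mul.congr_right fun x ↦ ?_
  rw [← Real.exp_add]
  ring_nf

theorem integral_Ioi_pow_mul_exp_neg (n : ℕ) (a : ℝ) :
    ∫ x in Set.Ioi a, x ^ n * Real.exp (-x) =
      n ! * (Real.exp (-a) * ∑ k ∈ range (n + 1), a ^ k / (k ! : ℝ)) := by
  have integrand_eq (x : ℝ) :
      x ^ n / (n ! : ℝ) * Real.exp (-x) = x ^ n * Real.exp (-x) / (n ! : ℝ) := by ring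
  have integral_div_factorial : (∫ x in Set.Ioi a, x ^ n * Real.exp (-x)) / (n ! : ℝ) =
      Real.exp (-a) * ∑ k ∈ range (n + 1), a ^ k / (k ! : ℝ) := by
    have := integral_Ioi_of_hasDerivAt_of_tendsto' (a := a)
      (fun x _ ↦ (hasDerivAt_neg_exp_neg_mul_sum_range_succ n x).congr_deriv (integrand_eq x))
      ((integrableOn_pow_mul_exp_neg_Ioi n a).div_const _)
      (tendsto_exp_neg_mul_sum_range_atTop (n + 1)).neg
    rwa [integral_div, neg_zero, zero_sub, neg_neg] at this
  rw [← integral_div_factorial, mul_div_cancel₀ _ (by positivity)]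

theorem exp_mul_integral_Ioi_pow_mul_exp_neg_div_factorial (n : ℕ) (a : ℝ) :
    Real.exp a * (∫ x in Set.Ioi a, x ^ n * Real.exp (-x)) / (n ! : ℝ) =
      ∑ k ∈ range (n + 1), a ^ k / (k ! : ℝ) := by
  rw [integral_Ioi_pow_mul_exp_neg, Real.exp_neg]
  field_simp

theorem exp_mul_factorial_sub_integral_Ioi_div_factorial (n : ℕ) (a : ℝ) :
    Real.exp a * ((n ! : ℝ) - ∫ x in Set.Ioi a, x ^ n * Real.exp (-x)) / (n ! : ℝ) =
      Real.exp a - ∑ k ∈ range (n + 1), a ^ k / (k ! : ℝ) := by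
  rw [← exp_mul_integral_Ioi_pow_mul_exp_neg_div_factorial]
  field_simp

theorem hasSum_pow_add_div_factorial (n : ℕ) (x : ℝ) :
    HasSum (fun k : ℕ ↦ x ^ (k + n) / ((k + n)! : ℝ))
      (Real.exp x - ∑ k ∈ range n, x ^ k / (k ! : ℝ)) := by
  rw [hasSum_nat_add_iff' (f := fun k ↦ x ^ k / (k ! : ℝ)), Real.exp_eq_exp_ℝ]
  exact NormedSpace.expSeries_div_hasSum_exp x

theorem pow_mul_exp_neg_mul_abs_sub_of_le (θ ε : ℝ) {s : ℝ} {k : ℕ} (hk : k ≤ s) :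
    θ ^ k * Real.exp (-ε * |s - k|) = Real.exp (-(ε * s)) * (θ * Real.exp ε) ^ k := by
  rw [abs_of_nonneg (sub_nonneg.mpr hk), mul_pow, ← Real.exp_nat_mul, mul_left_comm,
    ← Real.exp_add]
  ring_nf

theorem pow_mul_exp_neg_mul_abs_sub_of_ge (θ ε : ℝ) {s : ℝ} {k : ℕ} (hk : s ≤ k) :
    θ ^ k * Real.exp (-ε * |s - k|) = Real.exp (ε * s) * (θ * Real.exp (-ε)) ^ k := by
  rw [abs_of_nonpos (sub_nonpos.mpr hk), mul_pow, ← Real.exp_nat_mul, mul_left_comm,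
    ← Real.exp_add]
  ring_nf

theorem hasSum_pow_div_factorial_mul_exp_neg_mul_abs_sub (θ ε s : ℝ) :
    HasSum (fun k : ℕ ↦ θ ^ k / (k ! : ℝ) * Real.exp (-ε * |s - k|))
      (Real.exp (-(ε * s)) * ∑ k ∈ range ⌈s⌉₊, (θ * Real.exp ε) ^ k / (k ! : ℝ) +
        Real.exp (ε * s) * (Real.exp (θ * Real.exp (-ε)) -
          ∑ k ∈ range ⌈s⌉₊, (θ * Real.exp (-ε)) ^ k / (k ! : ℝ))) := by
  simp only [div_mul_eq_mul_div]
  have head_eq : ∑ k ∈ range ⌈s⌉₊, θ ^ k * Real.exp (-ε * |s - k|) / (k ! : ℝ) =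
      Real.exp (-(ε * s)) * ∑ k ∈ range ⌈s⌉₊, (θ * Real.exp ε) ^ k / (k ! : ℝ) := by
    rw [mul_sum]
    refine sum_congr rfl fun k hk ↦ ?_
    have hks : (k : ℝ) ≤ s := (Nat.lt_ceil.mp (mem_range.mp hk)).le
    rw [pow_mul_exp_neg_mul_abs_sub_of_le θ ε hks, mul_div_assoc]
  rw [← head_eq]
  refine HasSum.sum_range_add (f := fun k ↦ θ ^ k * Real.exp (-ε * |s - k|) / (k ! : ℝ)) ?_
  refine ((hasSum_pow_add_div_factorial ⌈s⌉₊ _).mul_left _).congr_fun fun k ↦ ?_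
  have hsk : s ≤ (k + ⌈s⌉₊ : ℕ) := Nat.ceil_le.mp (Nat.le_add_left _ _)
  rw [pow_mul_exp_neg_mul_abs_sub_of_ge θ ε hsk, mul_div_assoc]

theorem poisson_laplace_mixture_series_general
    (θ ε sobs : ℝ) (hs : 0 < sobs) (n : ℕ) (hn : n = ⌈sobs⌉₊) :
    HasSum (fun k : ℕ ↦ θ ^ k / (k ! : ℝ) * Real.exp (-ε * |sobs - (k : ℝ)|))
      (Real.exp (θ * Real.exp ε - ε * sobs) *
          (∫ r in Set.Ioi (θ * Real.exp ε), r ^ (n - 1) * Real.exp (-r)) / ((n - 1)! : ℝ) +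
        Real.exp (θ * Real.exp (-ε) + ε * sobs) *
          (((n - 1)! : ℝ) - ∫ r in Set.Ioi (θ * Real.exp (-ε)), r ^ (n - 1) * Real.exp (-r)) /
            ((n - 1)! : ℝ)) := by
  have sub_one_add_one : n - 1 + 1 = ⌈sobs⌉₊ := by
    have := Nat.ceil_pos.mpr hs
    lia
  convert! hasSum_pow_div_factorial_mul_exp_neg_mul_abs_sub θ ε sobs using 2
  · rw [← sub_one_add_one, ← exp_mul_integral_Ioi_pow_mul_exp_neg_div_factorial, sub_eq_neg_add,
      Real.exp_add]
    ring
  · rw [← sub_one_add_one, ← exp_mul_factorial_sub_integral_Ioi_div_factorial, add_comm,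
      Real.exp_add]
    ring

/-- **The Poisson–Laplace mixture series in terms of incomplete Gamma functions.**
For `θ > 0`, `ε > 0` and `sobs > 0` with `n = ⌈sobs⌉`,
`∑_{k=0}^∞ (θ^k/k!)·e^{−ε|sobs − k|}
  = e^{θe^ε − ε·sobs}·Γ(n, θe^ε)/Γ(n) + e^{θe^{−ε} + ε·sobs}·γ(n, θe^{−ε})/Γ(n)`,
where `Γ(n, x) = ∫_x^∞ r^{n−1}e^{−r} dr`, `Γ(n) = Γ(n, 0) = (n−1)!`, and
`γ(n, x) = Γ(n) − Γ(n, x)`. -/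
theorem poisson_laplace_mixture_series
    (θ ε sobs : ℝ) (hθ : 0 < θ) (hε : 0 < ε) (hs : 0 < sobs)
    (n : ℕ) (hn : n = ⌈sobs⌉₊) :
    ∑' k : ℕ, θ ^ k / (Nat.factorial k : ℝ) * Real.exp (-ε * |sobs - (k : ℝ)|) =
      Real.exp (θ * Real.exp ε - ε * sobs) *
          (∫ r in Set.Ioi (θ * Real.exp ε), r ^ (n - 1) * Real.exp (-r)) /
            (Nat.factorial (n - 1) : ℝ) +
        Real.exp (θ * Real.exp (-ε) + ε * sobs) *
          ((Nat.factorial (n - 1) : ℝ) -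
              ∫ r in Set.Ioi (θ * Real.exp (-ε)), r ^ (n - 1) * Real.exp (-r)) /
            (Nat.factorial (n - 1) : ℝ) :=
  (poisson_laplace_mixture_series_general θ ε sobs hs n hn).tsum_eq
end
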